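/- arXiv:2208.00851 — 2 statements merged into one kernel-verified Lean document; each statement's English description precedes it below -/
import Mathlib

section
/- For every x ∈ X* = {qπ/K : q ∈ ℤ} \ {qπ : q ∈ ℤ}, the loss function satisfies L(x) = |c2 / (c1·sin(x))|. -/
open Real

/-- `J(x,y) = Σ_{k=0}^{K−1} (b + a·k·T)·cos(y − 2xk)`. -/
noncomputable def Jfun (K : ℕ) (T b a x y : ℝ) : ℝ :=
  ∑ k ∈ Finset.range K, (b + a * k * T) * Real.cos (y - 2 * x * k)

/-- The loss function `L(x) = −inf_{y ∈ [0,2π)} J(x,y)/(c1·K)`, with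
`c1 = b + a·T·(K−1)/2`. -/
noncomputable def Lfun (K : ℕ) (T b a x : ℝ) : ℝ :=
  -sInf ((fun y => Jfun K T b a x y) '' Set.Ico 0 (2 * π)) /
    ((b + a * T * ((K : ℝ) - 1) / 2) * K)

/-- `f1(x) = sin(Kx)/sin(x)`. -/
noncomputable def f1 (K : ℕ) (x : ℝ) : ℝ := Real.sin (K * x) / Real.sin x

/-- `f2(x) = K·cos(Kx)/sin(x) − sin(Kx)·cos(x)/sin(x)²`. -/
noncomputable def f2 (K : ℕ) (x : ℝ) : ℝ :=
  (K : ℝ) * Real.cos (K * x) / Real.sin x -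
    Real.sin (K * x) * Real.cos x / (Real.sin x) ^ 2

/-!
With `z = e^{-2ix}`, `J(x, y)` is the real part of `e^{iy} S`, where
`S = ∑ k < K, (b + a k T) z ^ k`. As `y` runs over a full period, `e^{iy} S` runs over the circle
of radius `‖S‖`, so the infimum is `-‖S‖`. For `x ∈ X*`, `z ≠ 1` is a `K`-th root of unity, hence
`S = a T K / (z - 1)`, and `‖z - 1‖ = 2 |sin x|`.
-/

theorem sub_one_mul_sum_natCast_mul_pow {R : Type*} [CommRing R] (z : R) (n : ℕ) :
    (z - 1) * ∑ k ∈ Finset.range n, (k : R) * z ^ k =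
      n * z ^ n - z * ∑ k ∈ Finset.range n, z ^ k := by
  induction n with
  | zero => simp
  | succ n ih =>
    rw [Finset.sum_range_succ, Finset.sum_range_succ, mul_add, ih]
    push_cast
    ring

theorem sum_affine_mul_pow_of_pow_eq_one {F : Type*} [Field F] {z : F} {n : ℕ}
    (hzn : z ^ n = 1) (hz : z ≠ 1) (b d : F) :
    ∑ k ∈ Finset.range n, (b + d * k) * z ^ k = d * n / (z - 1) := by
  have sum_pow : ∑ k ∈ Finset.range n, z ^ k = 0 := by
    rw [geom_sum_eq hz, hzn, sub_self, zero_div]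
  have sum_natCast_mul_pow : ∑ k ∈ Finset.range n, (k : F) * z ^ k = n / (z - 1) := by
    rw [eq_div_iff (sub_ne_zero.2 hz), mul_comm, sub_one_mul_sum_natCast_mul_pow, hzn, sum_pow,
      mul_one, mul_zero, sub_zero]
  simp only [add_mul, mul_assoc, Finset.sum_add_distrib, ← Finset.mul_sum, sum_pow,
    sum_natCast_mul_pow, mul_zero, zero_add, mul_div_assoc]

theorem isLeast_re_exp_mul_I_mul (S : ℂ) :
    IsLeast ((fun y : ℝ => (Complex.exp (y * Complex.I) * S).re) '' Set.Ico 0 (2 * π)) (-‖S‖) := by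
  constructor
  · have periodic : Function.Periodic
        (fun y : ℝ => (Complex.exp (y * Complex.I) * S).re) (2 * π) := fun y => by
      simpa using congrArg (fun w => (w * S).re) (Complex.exp_mul_I_periodic y)
    have opposite : Complex.exp ((π - S.arg : ℝ) * Complex.I) * S = (-‖S‖ : ℝ) := by
      nth_rw 2 [← Complex.norm_mul_exp_arg_mul_I S]
      rw [mul_left_comm, ← Complex.exp_add, ← add_mul, ← Complex.ofReal_add, sub_add_cancel,
        Complex.exp_pi_mul_I, mul_neg_one, Complex.ofReal_neg]
    obtain ⟨y, hy, hval⟩ := periodic.exists_mem_Ico₀ two_pi_pos (π - S.arg)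
    exact ⟨y, hy, hval.symm.trans (by rw [opposite, Complex.ofReal_re])⟩
  · rintro _ ⟨y, -, rfl⟩
    calc -‖S‖ = -‖Complex.exp (y * Complex.I) * S‖ := by
          rw [norm_mul, Complex.norm_exp_ofReal_mul_I, one_mul]
      _ ≤ (Complex.exp (y * Complex.I) * S).re := neg_le_of_abs_le (Complex.abs_re_le_norm _)

/-- The unit complex number `e^{-2ix}`: the factor between the phases `e^{i(y - 2xk)}` of
consecutive terms of `J(x, y)`. -/
noncomputable def phaseStep (x : ℝ) : ℂ := Complex.exp (Complex.I * (-2 * x : ℝ))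

theorem norm_phaseStep_sub_one (x : ℝ) : ‖phaseStep x - 1‖ = 2 * |sin x| := by
  rw [phaseStep, Complex.norm_exp_I_mul_ofReal_sub_one, norm_mul, Real.norm_ofNat, Real.norm_eq_abs,
    show -2 * x / 2 = -x by ring, sin_neg, abs_neg]

theorem phaseStep_eq_one_iff {x : ℝ} : phaseStep x = 1 ↔ ∃ q : ℤ, x = q * π := by
  rw [← sub_eq_zero, ← norm_eq_zero, norm_phaseStep_sub_one, mul_eq_zero_iff_left two_ne_zero,
    abs_eq_zero, sin_eq_zero_iff]
  simp only [eq_comm]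

theorem phaseStep_pow (x : ℝ) (n : ℕ) : phaseStep x ^ n = phaseStep (n * x) := by
  rw [phaseStep, phaseStep, ← Complex.exp_nat_mul]
  congr 1
  push_cast
  ring

theorem phaseStep_pow_eq_one {K : ℕ} {x : ℝ} (hx : ∃ q : ℤ, x = q * π / K) :
    phaseStep x ^ K = 1 := by
  rcases eq_or_ne K 0 with rfl | hK
  · exact pow_zero _
  · obtain ⟨q, rfl⟩ := hx
    rw [phaseStep_pow, phaseStep_eq_one_iff]
    exact ⟨q, mul_div_cancel₀ _ (Nat.cast_ne_zero.2 hK)⟩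

theorem cos_sub_eq_re_exp_mul_phaseStep_pow (x y : ℝ) (k : ℕ) :
    cos (y - 2 * x * k) = (Complex.exp (y * Complex.I) * phaseStep x ^ k).re := by
  rw [phaseStep_pow, phaseStep, ← Complex.exp_add, ← Complex.exp_ofReal_mul_I_re]
  congr 2
  push_cast
  ring

theorem Jfun_eq_re (K : ℕ) (T b a x y : ℝ) :
    Jfun K T b a x y = (Complex.exp (y * Complex.I) *
      ∑ k ∈ Finset.range K, ((b : ℂ) + (a * T : ℝ) * k) * phaseStep x ^ k).re := by
  rw [Jfun, Finset.mul_sum, Complex.re_sum]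
  refine Finset.sum_congr rfl fun k _ => ?_
  rw [cos_sub_eq_re_exp_mul_phaseStep_pow, ← Complex.re_ofReal_mul]
  congr 1
  push_cast
  ring

theorem Lfun_eq_norm_div (K : ℕ) (T b a x : ℝ) :
    Lfun K T b a x = ‖∑ k ∈ Finset.range K, ((b : ℂ) + (a * T : ℝ) * k) * phaseStep x ^ k‖ /
      ((b + a * T * ((K : ℝ) - 1) / 2) * K) := by
  simp only [Lfun, Jfun_eq_re, (isLeast_re_exp_mul_I_mul _).csInf_eq, neg_neg]

theorem norm_sum_affine_mul_phaseStep_pow {K : ℕ} {x : ℝ} (b d : ℝ)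
    (hxK : ∃ q : ℤ, x = q * π / K) (hx : ¬ ∃ q : ℤ, x = q * π) :
    ‖∑ k ∈ Finset.range K, ((b : ℂ) + d * k) * phaseStep x ^ k‖ =
      |d| * K / (2 * |sin x|) := by
  rw [sum_affine_mul_pow_of_pow_eq_one (phaseStep_pow_eq_one hxK) (mt phaseStep_eq_one_iff.1 hx),
    norm_div, norm_mul, Complex.norm_real, Complex.norm_natCast, norm_phaseStep_sub_one,
    Real.norm_eq_abs]

theorem mean_weight_pos {K : ℕ} {T b a : ℝ} (hK : 0 < K)
    (hpos : ∀ k, k < K → 0 < b + a * k * T) :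
    0 < b + a * T * ((K : ℝ) - 1) / 2 := by
  have first_pos : 0 < b := by simpa using hpos 0 hK
  have last_pos : 0 < b + a * ((K : ℝ) - 1) * T := by
    simpa [Nat.cast_pred hK] using hpos (K - 1) (Nat.sub_one_lt_of_lt hK)
  linarith

theorem stmt_7_general (K : ℕ) (T b a x : ℝ)
    (hmean : 0 < b + a * T * ((K : ℝ) - 1) / 2)
    (hx : (∃ q : ℤ, x = q * π / K) ∧ ¬ (∃ q : ℤ, x = q * π)) :
    Lfun K T b a x =
      |(a * T / 2) / ((b + a * T * ((K : ℝ) - 1) / 2) * Real.sin x)| := by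
  have hK : (K : ℝ) ≠ 0 := by
    intro hK
    obtain ⟨⟨q, hq⟩, hx⟩ := hx
    exact hx ⟨0, by simpa [hK] using hq⟩
  rw [Lfun_eq_norm_div, norm_sum_affine_mul_phaseStep_pow _ _ hx.1 hx.2, abs_div,
    abs_mul _ (sin x), abs_of_pos hmean, abs_div, abs_two]
  field_simp

theorem stmt_7 (K : ℕ) (hK : 2 ≤ K) (T b a : ℝ) (hT : 0 < T) (hb : 0 < b)
    (hpos : ∀ k, k < K → 0 < b + a * k * T) (x : ℝ)
    (hx : (∃ q : ℤ, x = q * π / K) ∧ ¬ (∃ q : ℤ, x = q * π)) :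
    Lfun K T b a x =
      |(a * T / 2) / ((b + a * T * ((K : ℝ) - 1) / 2) * Real.sin x)| :=
  stmt_7_general K T b a x (mean_weight_pos (by omega) hpos) hx
end

section
/- For every real x not of the form qπ (q ∈ ℤ), the loss function is bounded as |f1(x)|/K ≤ L(x) ≤ sqrt((K−1)²·f1(x)² + f2(x)²) / (K·(K−1)). -/
open Real

/-!
Write `θ = y - (K - 1) x` and `s k = K - 1 - 2 k`, so that `y - 2 x k = θ + s k * x` and the weight
`b + a k T` is `c1 - (a T / 2) s k`. The sum of `cos (θ + s k * x)` telescopes to `f1 x * cos θ`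
and, as `f2` is the derivative of `f1`, differentiating in `x` evaluates the sum weighted by `s k`.
Hence `J` is the sinusoid `c1 f1 cos θ - (a T / 2) f2 sin θ`, whose minimum is minus its amplitude:
`L = √((c1 f1)² + ((a T / 2) f2)²) / (c1 K)`. Dropping the `f2` term gives the lower bound, and
`|a T / 2| (K - 1) ≤ c1`, which says that the two extreme weights are nonnegative, the upper bound.
-/

theorem mul_cos_sub_mul_sin_eq_sqrt_mul_cos (A B θ : ℝ) :
    A * cos θ - B * sin θ = √(A ^ 2 + B ^ 2) * cos (θ + Complex.arg (A + B * Complex.I)) := by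
  have hcos : √(A ^ 2 + B ^ 2) * cos (Complex.arg (A + B * Complex.I)) = A := by
    simpa [Complex.norm_add_mul_I] using Complex.norm_mul_cos_arg (A + B * Complex.I)
  have hsin : √(A ^ 2 + B ^ 2) * sin (Complex.arg (A + B * Complex.I)) = B := by
    simpa [Complex.norm_add_mul_I] using Complex.norm_mul_sin_arg (A + B * Complex.I)
  rw [cos_add]
  linear_combination -cos θ * hcos + sin θ * hsin

theorem isLeast_range_mul_cos_sub_mul_sin (A B : ℝ) :
    IsLeast (Set.range fun θ => A * cos θ - B * sin θ) (-√(A ^ 2 + B ^ 2)) := by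
  simp only [mul_cos_sub_mul_sin_eq_sqrt_mul_cos]
  refine ⟨⟨π - Complex.arg (A + B * Complex.I), by simp⟩, ?_⟩
  rintro _ ⟨θ, rfl⟩
  have hlower := mul_le_mul_of_nonneg_left (neg_one_le_cos (θ + Complex.arg (A + B * Complex.I)))
    (sqrt_nonneg (A ^ 2 + B ^ 2))
  linarith

theorem sqrt_sq_add_sq_div_le {c d m : ℝ} (u v : ℝ) (hc : 0 < c) (hm : 0 < m)
    (hd : |d * m| ≤ c) :
    √((c * u) ^ 2 + (d * v) ^ 2) / c ≤ √(m ^ 2 * u ^ 2 + v ^ 2) / m := by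
  have hdm : (d * m) ^ 2 ≤ c ^ 2 := sq_le_sq' (abs_le.mp hd).1 (abs_le.mp hd).2
  rw [div_le_iff₀ hc]
  refine sqrt_le_iff.mpr ⟨by positivity, ?_⟩
  rw [mul_pow _ c, div_pow, sq_sqrt (by positivity), div_mul_eq_mul_div,
    le_div_iff₀ (by positivity)]
  calc ((c * u) ^ 2 + (d * v) ^ 2) * m ^ 2
      = m ^ 2 * (c * u) ^ 2 + (d * m) ^ 2 * v ^ 2 := by ring
    _ ≤ m ^ 2 * (c * u) ^ 2 + c ^ 2 * v ^ 2 := by gcongr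
    _ = (m ^ 2 * u ^ 2 + v ^ 2) * c ^ 2 := by ring

theorem image_Ico_eq_range_of_periodic {α β : Type*} [AddCommGroup α] [LinearOrder α]
    [IsOrderedAddMonoid α] [Archimedean α] {f : α → β} {p : α} (hf : Function.Periodic f p)
    (hp : 0 < p) (t : α) : f '' Set.Ico t (t + p) = Set.range f := by
  refine (Set.image_subset_range _ _).antisymm ?_
  rintro _ ⟨y, rfl⟩
  obtain ⟨z, hz, hyz⟩ := hf.exists_mem_Ico hp y t
  exact ⟨z, hz, hyz.symm⟩

section SymmetricSums

variable {x : ℝ}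

theorem sum_cos_add_mul_eq_f1_mul_cos (n : ℕ) (hs : sin x ≠ 0) (θ : ℝ) :
    ∑ k ∈ Finset.range n, cos (θ + (n - 1 - 2 * k) * x) = f1 n x * cos θ := by
  have telescope : ∀ k : ℕ, 2 * sin x * cos (θ + (n - 1 - 2 * k) * x) =
      sin (θ + (n - 2 * k) * x) - sin (θ + (n - 2 * (k + 1 : ℕ)) * x) := by
    intro k
    rw [sin_sub_sin]
    push_cast
    ring_nf
  have hsum : 2 * sin x * ∑ k ∈ Finset.range n, cos (θ + (n - 1 - 2 * k) * x) =
      2 * sin (n * x) * cos θ := by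
    rw [Finset.mul_sum, Finset.sum_congr rfl fun k _ => telescope k,
      Finset.sum_range_sub' fun k : ℕ => sin (θ + (n - 2 * k) * x), sin_sub_sin]
    push_cast
    ring_nf
  rw [f1]
  field_simp
  linarith

theorem sum_sin_add_mul_eq_f1_mul_sin (n : ℕ) (hs : sin x ≠ 0) (θ : ℝ) :
    ∑ k ∈ Finset.range n, sin (θ + (n - 1 - 2 * k) * x) = f1 n x * sin θ := by
  simpa only [sub_add_eq_add_sub, cos_sub_pi_div_two] using
    sum_cos_add_mul_eq_f1_mul_cos n hs (θ - π / 2)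

theorem hasDerivAt_f1 (n : ℕ) (hs : sin x ≠ 0) : HasDerivAt (f1 n) (f2 n x) x := by
  have hnum : HasDerivAt (fun u : ℝ => sin (n * u)) (cos (n * x) * n) x := by
    simpa using ((hasDerivAt_id x).const_mul (n : ℝ)).sin
  refine (hnum.div (hasDerivAt_sin x) hs).congr_deriv ?_
  rw [f2]
  field_simp

theorem sum_mul_cos_add_mul_eq_f2_mul_sin (n : ℕ) (hs : sin x ≠ 0) (θ : ℝ) :
    ∑ k ∈ Finset.range n, (n - 1 - 2 * k) * cos (θ + (n - 1 - 2 * k) * x) = f2 n x * sin θ := by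
  have hterm : ∀ s : ℝ, HasDerivAt (fun u => sin (θ + s * u)) (s * cos (θ + s * x)) x := by
    intro s
    simpa [mul_comm] using (((hasDerivAt_id x).const_mul s).const_add θ).sin
  have hsum := HasDerivAt.fun_sum (u := Finset.range n) fun k _ => hterm (n - 1 - 2 * k)
  have hclosed := (hasDerivAt_f1 n hs).mul_const (sin θ)
  refine hsum.unique (hclosed.congr_of_eventuallyEq ?_)
  filter_upwards [continuous_sin.continuousAt.eventually_ne hs] with u hu
  exact sum_sin_add_mul_eq_f1_mul_sin n hu θ

end SymmetricSums

/-- The mean `c1` of the weights `b + a * k * T` for `k = 0, …, K - 1`. -/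
noncomputable def meanWeight (K : ℕ) (T b a : ℝ) : ℝ := b + a * T * ((K : ℝ) - 1) / 2

section Loss

variable {K : ℕ} {T b a x : ℝ}

theorem abs_half_slope_mul_le_meanWeight (hfirst : 0 ≤ b) (hlast : 0 ≤ b + a * (K - 1) * T) :
    |a * T / 2 * (K - 1)| ≤ meanWeight K T b a := by
  rw [meanWeight, abs_le]
  constructor <;> linarith

theorem Jfun_eq_mul_cos_sub_mul_sin (hs : sin x ≠ 0) (y : ℝ) :
    Jfun K T b a x y =
      meanWeight K T b a * f1 K x * cos (y - (K - 1) * x) -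
        a * T / 2 * f2 K x * sin (y - (K - 1) * x) := by
  have hterm : ∀ k : ℕ, (b + a * k * T) * cos (y - 2 * x * k) =
      meanWeight K T b a * cos (y - (K - 1) * x + (K - 1 - 2 * k) * x) -
        a * T / 2 * ((K - 1 - 2 * k) * cos (y - (K - 1) * x + (K - 1 - 2 * k) * x)) := by
    intro k
    rw [meanWeight]
    ring_nf
  rw [Jfun, Finset.sum_congr rfl fun k _ => hterm k, Finset.sum_sub_distrib, ← Finset.mul_sum,
    ← Finset.mul_sum, sum_cos_add_mul_eq_f1_mul_cos K hs, sum_mul_cos_add_mul_eq_f2_mul_sin K hs]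
  ring

theorem periodic_Jfun (K : ℕ) (T b a x : ℝ) : Function.Periodic (Jfun K T b a x) (2 * π) := by
  intro y
  simp only [Jfun, add_sub_right_comm, cos_add_two_pi]

theorem isLeast_range_Jfun (hs : sin x ≠ 0) :
    IsLeast (Set.range (Jfun K T b a x))
      (-√((meanWeight K T b a * f1 K x) ^ 2 + (a * T / 2 * f2 K x) ^ 2)) := by
  have hrange := (Equiv.subRight ((K - 1) * x)).surjective.range_comp fun θ =>
    meanWeight K T b a * f1 K x * cos θ - a * T / 2 * f2 K x * sin θ
  rw [funext (Jfun_eq_mul_cos_sub_mul_sin hs)]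
  exact hrange ▸ isLeast_range_mul_cos_sub_mul_sin _ _

theorem Lfun_eq_sqrt_div (hs : sin x ≠ 0) :
    Lfun K T b a x =
      √((meanWeight K T b a * f1 K x) ^ 2 + (a * T / 2 * f2 K x) ^ 2) /
        (meanWeight K T b a * K) := by
  have himage := image_Ico_eq_range_of_periodic (periodic_Jfun K T b a x) two_pi_pos 0
  rw [zero_add] at himage
  rw [Lfun, himage, (isLeast_range_Jfun hs).csInf_eq, neg_neg, meanWeight]

theorem abs_f1_div_le_Lfun (hs : sin x ≠ 0) (hc : 0 < meanWeight K T b a) :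
    |f1 K x| / K ≤ Lfun K T b a x := by
  calc |f1 K x| / K = |meanWeight K T b a * f1 K x| / (meanWeight K T b a * K) := by
        rw [abs_mul, abs_of_pos hc, mul_div_mul_left _ _ hc.ne']
    _ ≤ √((meanWeight K T b a * f1 K x) ^ 2 + (a * T / 2 * f2 K x) ^ 2) /
          (meanWeight K T b a * K) := by
        gcongr
        exact abs_le_sqrt (le_add_of_nonneg_right (sq_nonneg _))
    _ = Lfun K T b a x := (Lfun_eq_sqrt_div hs).symm

theorem Lfun_le_sqrt_div (hs : sin x ≠ 0) (hK : 1 < K) (hc : 0 < meanWeight K T b a)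
    (hslope : |a * T / 2 * (K - 1)| ≤ meanWeight K T b a) :
    Lfun K T b a x ≤ √((K - 1) ^ 2 * f1 K x ^ 2 + f2 K x ^ 2) / (K * (K - 1)) := by
  have hm : (0 : ℝ) < K - 1 := sub_pos.mpr (by exact_mod_cast hK)
  rw [Lfun_eq_sqrt_div hs, ← div_div, mul_comm (K : ℝ), ← div_div]
  exact div_le_div_of_nonneg_right (sqrt_sq_add_sq_div_le _ _ hc hm hslope) K.cast_nonneg

end Loss

theorem stmt_8 (K : ℕ) (hK : 2 ≤ K) (T b a : ℝ) (hT : 0 < T) (hb : 0 < b)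
    (hpos : ∀ k, k < K → 0 < b + a * k * T) (x : ℝ)
    (hx : ¬ ∃ q : ℤ, x = q * π) :
    |f1 K x| / K ≤ Lfun K T b a x ∧
    Lfun K T b a x ≤
      Real.sqrt (((K : ℝ) - 1) ^ 2 * (f1 K x) ^ 2 + (f2 K x) ^ 2) /
        ((K : ℝ) * ((K : ℝ) - 1)) := by
  have hs : sin x ≠ 0 := sin_ne_zero_iff.mpr fun q hq => hx ⟨q, hq.symm⟩
  have hlast : 0 < b + a * (K - 1) * T := by
    simpa [Nat.cast_sub (one_le_two.trans hK)] using hpos (K - 1) (by lia)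
  have hc : 0 < meanWeight K T b a := by
    rw [meanWeight]
    linarith
  exact ⟨abs_f1_div_le_Lfun hs hc,
    Lfun_le_sqrt_div hs hK hc (abs_half_slope_mul_le_meanWeight hb.le hlast.le)⟩
end
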